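/- Let λ be a partition, n, m ≥ 1, T ∈ B_λ(n,m), and 1 ≤ i ≤ m−1. Apply the i-bracketing rule to the word w(T), where each position of w(T) corresponds to a unique box of T. Suppose some letter i+1 is unmatched, and let B be the box of T corresponding to the leftmost unmatched letter i+1; say B carries the entry (k,i+1). Then the filling T' obtained from T by changing the entry of B from (k,i+1) to (k,i) is again a lexicographic bitableau in B_λ(n,m); moreover a(T') = a(T) and b(T') = b(T) + e_i − e_{i+1} (where e_j is the j-th standard basis vector of ℕ^m). -/

import Mathlib

/-- Lexicographic (weak) order on pairs: `(a,b) ≤ (a',b')` iff `a < a'`, or `a = a'` and `b ≤ b'`. -/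
def lexLe (p q : ℕ × ℕ) : Prop := p.1 < q.1 ∨ (p.1 = q.1 ∧ p.2 ≤ q.2)

/-- Lexicographic strict order on pairs. -/
def lexLt (p q : ℕ × ℕ) : Prop := p.1 < q.1 ∨ (p.1 = q.1 ∧ p.2 < q.2)

/-- `T` (a total function on positions, row & column both 0-indexed) is a lexicographic
bitableau of shape `lam` with entries in `[n] × [m]`: on the cells of `lam`, entries are pairs
in `{1,…,n} × {1,…,m}`, weakly increasing along rows and strictly increasing down columns
for the lexicographic order. -/
def IsBitabT (lam : YoungDiagram) (n m : ℕ) (T : ℕ → ℕ → ℕ × ℕ) : Prop :=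
  (∀ i j, (i, j) ∈ lam → (1 ≤ (T i j).1 ∧ (T i j).1 ≤ n) ∧ (1 ≤ (T i j).2 ∧ (T i j).2 ≤ m)) ∧
  (∀ i j j', (i, j') ∈ lam → j ≤ j' → lexLe (T i j) (T i j')) ∧
  (∀ i i' j, (i', j) ∈ lam → i < i' → lexLt (T i j) (T i' j))

/-- `i`-th entry of the `a`-weight of `T`: the number of boxes whose entry has first coordinate `i`. -/
def aWtT (lam : YoungDiagram) (T : ℕ → ℕ → ℕ × ℕ) (i : ℕ) : ℕ :=
  (lam.cells.filter fun c => (T c.1 c.2).1 = i).card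

/-- `j`-th entry of the `b`-weight of `T`: the number of boxes whose entry has second coordinate `j`. -/
def bWtT (lam : YoungDiagram) (T : ℕ → ℕ → ℕ × ℕ) (j : ℕ) : ℕ :=
  (lam.cells.filter fun c => (T c.1 c.2).2 = j).card

/-- The list of boxes of `T` in sort-by-top reading order: boxes with first coordinate
`k = 1, …, n` in increasing order, within each group rows from bottom to top, left to right
within each row. -/
def wBoxes (lam : YoungDiagram) (n : ℕ) (T : ℕ → ℕ → ℕ × ℕ) : List (ℕ × ℕ) :=
  (List.range n).flatMap fun k =>
    ((List.range (lam.colLen 0)).reverse).flatMap fun r =>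
      ((List.range (lam.rowLen r)).filter fun c => decide ((T r c).1 = k + 1)).map fun c => (r, c)

/-- The sort-by-top reading word `w(T)`: the second coordinates of the boxes, in sort-by-top
reading order. -/
def wWordT (lam : YoungDiagram) (n : ℕ) (T : ℕ → ℕ → ℕ × ℕ) : List ℕ :=
  (wBoxes lam n T).map fun c => (T c.1 c.2).2

/-- Under the `i`-bracketing rule (each letter `i` becomes `)`, each letter `i+1` becomes `(`,
other letters are ignored), the letter at position `p` of `w` is an unmatched `)` (letter `i`):
equivalently, every window of `w` ending at `p` contains strictly more letters `i` than
letters `i+1`. -/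
def UnmatchedClose (w : List ℕ) (i p : ℕ) : Prop :=
  p < w.length ∧ w.getD p 0 = i ∧
    ∀ q, q ≤ p →
      ((w.drop q).take (p + 1 - q)).count (i + 1) < ((w.drop q).take (p + 1 - q)).count i

/-- Under the `i`-bracketing rule, the letter at position `p` of `w` is an unmatched `(`
(letter `i+1`): equivalently, every window of `w` starting at `p` contains strictly more
letters `i+1` than letters `i`. -/
def UnmatchedOpen (w : List ℕ) (i p : ℕ) : Prop :=
  p < w.length ∧ w.getD p 0 = i + 1 ∧
    ∀ q, p ≤ q → q < w.length →
      ((w.drop p).take (q + 1 - p)).count i < ((w.drop p).take (q + 1 - p)).count (i + 1)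


/-- The reading order on boxes. -/
def rdLt (T : ℕ → ℕ → ℕ × ℕ) (x y : ℕ × ℕ) : Prop :=
  (T x.1 x.2).1 < (T y.1 y.2).1 ∨
    ((T x.1 x.2).1 = (T y.1 y.2).1 ∧ (y.1 < x.1 ∨ (y.1 = x.1 ∧ x.2 < y.2)))

lemma wBoxes_pairwise (lam : YoungDiagram) (n : ℕ) (T : ℕ → ℕ → ℕ × ℕ) :
    (wBoxes lam n T).Pairwise (rdLt T) := by
  unfold wBoxes
  rw [List.pairwise_flatMap]
  constructor
  · intro k _
    rw [List.pairwise_flatMap]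
    constructor
    · intro r _
      rw [List.pairwise_map]
      have h := (List.pairwise_lt_range (n := lam.rowLen r)).filter
        (fun c => decide ((T r c).1 = k + 1))
      refine List.Pairwise.imp_of_mem ?_ h
      intro a b ha hb hab
      simp only [List.mem_filter, decide_eq_true_eq] at ha hb
      exact Or.inr ⟨ha.2.trans hb.2.symm, Or.inr ⟨rfl, hab⟩⟩
    · rw [List.pairwise_reverse]
      refine List.Pairwise.imp ?_ (List.pairwise_lt_range (n := lam.colLen 0))
      intro a b hab x hx y hy
      simp only [List.mem_map, List.mem_filter, decide_eq_true_eq] at hx hy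
      obtain ⟨c, hc, rfl⟩ := hx
      obtain ⟨d, hd, rfl⟩ := hy
      right
      simp only
      omega
  · refine List.Pairwise.imp ?_ (List.pairwise_lt_range (n := n))
    intro a b hab x hx y hy
    simp only [List.mem_flatMap, List.mem_map, List.mem_filter, decide_eq_true_eq] at hx hy
    obtain ⟨r, _, c, hc, rfl⟩ := hx
    obtain ⟨r', _, d, hd, rfl⟩ := hy
    left
    simp only
    omega

lemma mem_wBoxes (lam : YoungDiagram) (n m : ℕ) (T : ℕ → ℕ → ℕ × ℕ) (hT : IsBitabT lam n m T)
    (x : ℕ × ℕ) : x ∈ wBoxes lam n T ↔ x ∈ lam := by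
  obtain ⟨r, c⟩ := x
  unfold wBoxes
  simp only [List.mem_flatMap, List.mem_map, List.mem_filter, decide_eq_true_eq, List.mem_range,
    List.mem_reverse, Prod.mk.injEq]
  constructor
  · rintro ⟨k, hk, r', hr', c', ⟨hc', h⟩, rfl, rfl⟩
    exact YoungDiagram.mem_iff_lt_rowLen.2 hc'
  · intro h
    have h1 := (hT.1 r c h).1
    refine ⟨(T r c).1 - 1, by omega, r, ?_, c, ⟨YoungDiagram.mem_iff_lt_rowLen.1 h, by omega⟩,
      rfl, rfl⟩
    exact YoungDiagram.mem_iff_lt_colLen.1 (lam.up_left_mem le_rfl (Nat.zero_le c) h)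

lemma rdLt_idx (lam : YoungDiagram) (n : ℕ) (T : ℕ → ℕ → ℕ × ℕ) (s t : ℕ)
    (hs : s < (wBoxes lam n T).length) (ht : t < (wBoxes lam n T).length) :
    rdLt T ((wBoxes lam n T)[s]) ((wBoxes lam n T)[t]) ↔ s < t := by
  have H := List.pairwise_iff_getElem.1 (wBoxes_pairwise lam n T)
  constructor
  · intro h
    by_contra hlt
    rcases Nat.lt_or_eq_of_le (not_lt.1 hlt) with h1 | h1
    · have h2 := H t s ht hs h1
      unfold rdLt at h h2
      omega
    · subst h1
      unfold rdLt at h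
      omega
  · exact H s t hs ht

lemma mem_window {α : Type*} (L : List α) (p q : ℕ) (hq : q < L.length) (x : α) :
    x ∈ (L.drop p).take (q + 1 - p) ↔ ∃ t, ∃ ht : t < L.length, p ≤ t ∧ t ≤ q ∧ L[t] = x := by
  rw [List.mem_iff_getElem]
  constructor
  · rintro ⟨j, hj, rfl⟩
    simp only [List.length_take, List.length_drop] at hj
    exact ⟨p + j, by omega, by omega, by omega, by simp⟩
  · rintro ⟨t, ht, h1, h2, rfl⟩
    refine ⟨t - p, by simp only [List.length_take, List.length_drop]; omega, ?_⟩
    simp only [List.getElem_take, List.getElem_drop]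
    congr 1
    omega

lemma unmatched_pred (w : List ℕ) (i p : ℕ) (hp : UnmatchedOpen w i (p + 1))
    (h : w.getD p 0 = i + 1) : UnmatchedOpen w i p := by
  obtain ⟨h1, h2, h3⟩ := hp
  refine ⟨by omega, h, ?_⟩
  intro q hq hql
  have hpl : p < w.length := by omega
  have hw : w[p] = i + 1 := by
    rw [← h, List.getD_eq_getElem _ _ hpl]
  rw [List.drop_eq_getElem_cons hpl, hw]
  rw [show q + 1 - p = (q - p) + 1 by omega, List.take_succ_cons]
  rw [List.count_cons_self, List.count_cons_of_ne (by omega)]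
  rcases Nat.lt_or_eq_of_le hq with h4 | h4
  · have := h3 q h4 hql
    rw [show q + 1 - (p + 1) = q - p by omega] at this
    omega
  · subst h4
    simp

/-- raising operators are well defined. Let `T ∈ B_λ(n,m)` and
`1 ≤ i ≤ m-1`. Suppose under the `i`-bracketing rule applied to `w(T)` some letter `i+1` is
unmatched, let `B` be the box of `T` corresponding to the leftmost unmatched letter `i+1`,
and let `T'` be obtained from `T` by changing the entry `(k, i+1)` of `B` to `(k, i)`. Then
`T' ∈ B_λ(n,m)`, `a(T') = a(T)`, and `b(T') = b(T) + e_i − e_{i+1}`. -/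
theorem stmt_5 (lam : YoungDiagram) (n m : ℕ) (hn : 1 ≤ n) (hm : 1 ≤ m)
    (T : ℕ → ℕ → ℕ × ℕ) (hT : IsBitabT lam n m T)
    (i : ℕ) (hi1 : 1 ≤ i) (hi2 : i ≤ m - 1)
    (p : ℕ) (hp : UnmatchedOpen (wWordT lam n T) i p)
    (hleftmost : ∀ p', p' < p → ¬ UnmatchedOpen (wWordT lam n T) i p')
    (B : ℕ × ℕ) (hB : B = (wBoxes lam n T).getD p (0, 0))
    (T' : ℕ → ℕ → ℕ × ℕ)
    (hT' : T' = fun r c => if (r, c) = B then ((T B.1 B.2).1, i) else T r c) :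
    IsBitabT lam n m T' ∧
    (∀ k, aWtT lam T' k = aWtT lam T k) ∧
    (∀ j, bWtT lam T' j =
      if j = i then bWtT lam T j + 1 else if j = i + 1 then bWtT lam T j - 1
      else bWtT lam T j) := by
  have hB0 := hB
  obtain ⟨hpl, hpi, hpw⟩ := hp
  have hlen : (wWordT lam n T).length = (wBoxes lam n T).length := by simp [wWordT]
  have hpL : p < (wBoxes lam n T).length := hlen ▸ hpl
  rw [List.getD_eq_getElem _ _ hpL] at hB
  have hword : ∀ t (ht : t < (wBoxes lam n T).length), (wWordT lam n T).getD t 0 =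
      (T ((wBoxes lam n T)[t]).1 ((wBoxes lam n T)[t]).2).2 := by
    intro t ht
    rw [List.getD_eq_getElem _ _ (by omega)]
    simp [wWordT]
  have hBi : (T B.1 B.2).2 = i + 1 := by
    rw [← hpi, hword p hpL, hB]
  have hBlam : B ∈ lam := by
    rw [← mem_wBoxes lam n m T hT, hB]
    exact List.getElem_mem _
  obtain ⟨r, c⟩ := B
  simp only at hBi hT'
  obtain ⟨k, hk⟩ : ∃ k, (T r c).1 = k := ⟨_, rfl⟩
  have hidx : ∀ x ∈ lam, ∃ t, ∃ ht : t < (wBoxes lam n T).length, (wBoxes lam n T)[t] = x := by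
    intro x hx
    rw [← mem_wBoxes lam n m T hT] at hx
    obtain ⟨t, ht, h⟩ := List.mem_iff_getElem.1 hx
    exact ⟨t, ht, h⟩
  obtain ⟨hT1, hT2, hT3⟩ := id hT
  -- left neighbours
  have hleft : ∀ y, y < c → lexLe (T r y) (k, i) := by
    intro y hy
    have hprev : (r, c - 1) ∈ lam := lam.up_left_mem le_rfl (Nat.sub_le c 1) hBlam
    have h1 : lexLe (T r y) (T r (c - 1)) := hT2 r y (c - 1) hprev (by omega)
    have h2 : lexLe (T r (c - 1)) (T r c) := hT2 r (c - 1) c hBlam (by omega)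
    have h3 : ¬ ((T r (c - 1)).1 = k ∧ (T r (c - 1)).2 = i + 1) := by
      rintro ⟨e1, e2⟩
      obtain ⟨t, ht, hx⟩ := hidx _ hprev
      have htp : t < p := by
        rw [← rdLt_idx lam n T t p ht hpL, hx, ← hB]
        exact Or.inr ⟨e1.trans hk.symm, Or.inr ⟨rfl, Nat.sub_lt (by omega) Nat.one_pos⟩⟩
      have hadj : p = t + 1 := by
        by_contra hne
        have hs : t + 1 < (wBoxes lam n T).length := by omega
        have a1 := (rdLt_idx lam n T t (t + 1) ht hs).2 (by omega)
        have a2 := (rdLt_idx lam n T (t + 1) p hs hpL).2 (by omega)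
        rw [hx] at a1
        rw [← hB] at a2
        unfold rdLt at a1 a2
        simp only at a1 a2
        omega
      refine hleftmost t htp (unmatched_pred _ _ _ (hadj ▸ ⟨hpl, hpi, hpw⟩) ?_)
      rw [hword t ht, hx]
      exact e2
    unfold lexLe at *
    simp only
    omega
  -- upper neighbours
  have hup : ∀ x, x < r → lexLt (T x c) (k, i) := by
    intro x hx
    obtain ⟨r, rfl⟩ : ∃ r', r = r' + 1 := ⟨r - 1, by omega⟩
    have hprev : (r, c) ∈ lam := lam.up_left_mem (Nat.le_succ r) le_rfl hBlam
    have h2 : lexLt (T r c) (T (r + 1) c) := hT3 r (r + 1) c hBlam (by omega)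
    have h3 : ¬ ((T r c).1 = k ∧ (T r c).2 = i) := by
      rintro ⟨e1, e2⟩
      let S := (Finset.range (lam.rowLen (r + 1))).filter
        (fun y => (T (r + 1) y).1 = k ∧ (T (r + 1) y).2 = i + 1)
      have hS : ∀ y, y ∈ S ↔ (r + 1, y) ∈ lam ∧ (T (r + 1) y).1 = k ∧
          (T (r + 1) y).2 = i + 1 := by
        intro y
        simp only [S, Finset.mem_filter, Finset.mem_range, YoungDiagram.mem_iff_lt_rowLen]
      obtain ⟨d, hdS, hdmax⟩ := S.exists_max_image id ⟨c, (hS c).2 ⟨hBlam, hk, hBi⟩⟩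
      have hcd : c ≤ d := hdmax c ((hS c).2 ⟨hBlam, hk, hBi⟩)
      obtain ⟨hdlam, hd1, hd2⟩ := (hS d).1 hdS
      have hdlam' : (r, d) ∈ lam := lam.up_left_mem (Nat.le_succ r) le_rfl hdlam
      have habove : ∀ y, (r + 1, y) ∈ lam → c ≤ y → y ≤ d →
          (T r y).1 = k ∧ (T r y).2 = i := by
        intro y hy hcy hyd
        have b1 := hT2 r c y (lam.up_left_mem (Nat.le_succ r) le_rfl hy) hcy
        have b2 := hT3 r (r + 1) y hy (by omega)
        have b3 := hT2 (r + 1) y d hdlam hyd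
        unfold lexLe lexLt at *
        omega
      obtain ⟨hd3, hd4⟩ := habove d hdlam hcd le_rfl
      obtain ⟨q, hq, hqx⟩ := hidx _ hdlam'
      have hpq : p < q := by
        rw [← rdLt_idx lam n T p q hpL hq, hqx, ← hB]
        unfold rdLt
        simp only
        omega
      have hcnt := hpw q hpq.le (by omega)
      have hmapw : ((wWordT lam n T).drop p).take (q + 1 - p) =
          (((wBoxes lam n T).drop p).take (q + 1 - p)).map (fun c => (T c.1 c.2).2) := by
        unfold wWordT
        rw [List.map_take, List.map_drop]
      have hmem := mem_window (wBoxes lam n T) p q hq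
      have hmem' : ∀ x, x ∈ ((wBoxes lam n T).drop p).take (q + 1 - p) ↔
          x ∈ lam ∧ ¬ rdLt T x (r + 1, c) ∧ ¬ rdLt T (r, d) x := by
        intro x
        rw [hmem]
        constructor
        · rintro ⟨t, ht, hpt, htq, rfl⟩
          refine ⟨(mem_wBoxes lam n m T hT _).1 (List.getElem_mem _), ?_, ?_⟩
          · rw [hB, rdLt_idx]
            omega
          · rw [← hqx, rdLt_idx]
            omega
        · rintro ⟨hxl, hx1, hx2⟩
          obtain ⟨t, ht, rfl⟩ := hidx x hxl
          rw [hB, rdLt_idx] at hx1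
          rw [← hqx, rdLt_idx] at hx2
          exact ⟨t, ht, by omega, by omega, rfl⟩
      have hnd : (((wBoxes lam n T).drop p).take (q + 1 - p)).Nodup := by
        have : (wBoxes lam n T).Nodup := by
          refine List.Pairwise.imp ?_ (wBoxes_pairwise lam n T)
          rintro a b hab rfl
          unfold rdLt at hab
          omega
        exact (this.sublist (List.drop_sublist _ _)).sublist (List.take_sublist _ _)
      rw [hmapw] at hcnt
      generalize ((wBoxes lam n T).drop p).take (q + 1 - p) = W at hcnt hmem' hnd
      have hcw : ∀ j, (W.map (fun c => (T c.1 c.2).2)).count j =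
          (W.filter (fun c => decide ((T c.1 c.2).2 = j))).length := by
        intro j
        rw [List.count, List.countP_map, List.countP_eq_length_filter]
        congr 1
      rw [hcw, hcw] at hcnt
      have hchar : ∀ x ∈ W.filter (fun c => decide ((T c.1 c.2).2 = i + 1)),
          x ∈ lam ∧ x.1 = r + 1 ∧ (T x.1 x.2).1 = k ∧ c ≤ x.2 ∧ x.2 ≤ d := by
        rintro ⟨x, y⟩ hxy
        rw [List.mem_filter, hmem'] at hxy
        obtain ⟨⟨hl, n1, n2⟩, n3⟩ := hxy
        simp only [decide_eq_true_eq] at n3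
        unfold rdLt at n1 n2
        simp only at n1 n2 ⊢
        have g1 : (T x y).1 = k := by omega
        have g2 : x = r ∨ x = r + 1 := by omega
        rcases g2 with rfl | rfl
        · exfalso
          have := hT2 x y d hdlam' (by omega)
          unfold lexLe at this
          omega
        · exact ⟨hl, rfl, g1, by omega, hdmax y ((hS y).2 ⟨hl, g1, n3⟩)⟩
      have hsub : ((W.filter (fun c => decide ((T c.1 c.2).2 = i + 1))).map
          (fun x => (r, x.2))) ⊆ W.filter (fun c => decide ((T c.1 c.2).2 = i)) := by
        intro z hz
        obtain ⟨⟨x, y⟩, hx, rfl⟩ := List.mem_map.1 hz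
        obtain ⟨c1, c2, c3, c4, c5⟩ := hchar _ hx
        simp only at c1 c2 c3 c4 c5 ⊢
        subst c2
        obtain ⟨g1, g2⟩ := habove y c1 c4 c5
        rw [List.mem_filter, hmem']
        refine ⟨⟨lam.up_left_mem (Nat.le_succ r) le_rfl c1, ?_, ?_⟩, by simpa using g2⟩
        · unfold rdLt
          simp only
          omega
        · unfold rdLt
          simp only
          omega
      have hnd2 : ((W.filter (fun c => decide ((T c.1 c.2).2 = i + 1))).map
          (fun x => (r, x.2))).Nodup := by
        refine List.Nodup.map_on ?_ (hnd.filter _)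
        intro x hx y hy hxy
        have u := (hchar x hx).2.1
        have v := (hchar y hy).2.1
        simp only [Prod.mk.injEq, true_and] at hxy
        exact Prod.ext (u.trans v.symm) hxy
      have := (List.subperm_of_subset hnd2 hsub).length_le
      rw [List.length_map] at this
      omega
    have h1 : x = r ∨ lexLt (T x c) (T r c) := by
      by_cases hxr : x = r
      · exact Or.inl hxr
      · exact Or.inr (hT3 x r c hprev (by omega))
    unfold lexLt at *
    simp only
    rcases h1 with rfl | h1 <;> omega
  have hTB : T' r c = (k, i) := by rw [hT']; simp [hk]
  have hTne : ∀ x y, (x, y) ≠ (r, c) → T' x y = T x y := by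
    intro x y h
    rw [hT']
    simp only
    rw [if_neg h]
  have hcells : (r, c) ∈ lam.cells := hBlam
  refine ⟨⟨?_, ?_, ?_⟩, ?_, ?_⟩
  · intro x y hxy
    by_cases h : (x, y) = (r, c)
    · obtain ⟨rfl, rfl⟩ := Prod.mk.inj h
      rw [hTB]
      have := hT1 x y hxy
      simp only
      omega
    · rw [hTne x y h]
      exact hT1 x y hxy
  · intro x y y' hxy hyy
    have h0 := hT2 x y y' hxy hyy
    by_cases h : (x, y) = (r, c)
    · obtain ⟨rfl, rfl⟩ := Prod.mk.inj h
      by_cases h' : (x, y') = (x, y)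
      · rw [(Prod.mk.inj h').2]
        exact Or.inr ⟨rfl, le_rfl⟩
      · rw [hTB, hTne _ _ h']
        unfold lexLe at *
        simp only
        omega
    · by_cases h' : (x, y') = (r, c)
      · obtain ⟨rfl, rfl⟩ := Prod.mk.inj h'
        rw [hTB, hTne _ _ h]
        refine hleft y (lt_of_le_of_ne hyy ?_)
        rintro rfl
        exact h rfl
      · rw [hTne _ _ h, hTne _ _ h']
        exact h0
  · intro x x' y hxy hxx
    have h0 := hT3 x x' y hxy hxx
    by_cases h : (x, y) = (r, c)
    · obtain ⟨rfl, rfl⟩ := Prod.mk.inj h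
      have h' : (x', y) ≠ (x, y) := by
        intro e
        have := (Prod.mk.inj e).1
        omega
      rw [hTB, hTne _ _ h']
      unfold lexLt at *
      simp only
      omega
    · by_cases h' : (x', y) = (r, c)
      · obtain ⟨rfl, rfl⟩ := Prod.mk.inj h'
        rw [hTB, hTne _ _ h]
        exact hup x hxx
      · rw [hTne _ _ h, hTne _ _ h']
        exact h0
  · intro j
    unfold aWtT
    congr 1
    apply Finset.filter_congr
    rintro ⟨x, y⟩ _
    by_cases h : (x, y) = (r, c)
    · obtain ⟨rfl, rfl⟩ := Prod.mk.inj h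
      simp only [hTB, hk]
    · simp only [hTne _ _ h]
  · intro j
    unfold bWtT
    split_ifs with hj hj
    · subst hj
      rw [← Finset.card_insert_of_notMem (a := (r, c)) (by simp [hBi])]
      congr 1
      ext ⟨x, y⟩
      by_cases h : (x, y) = (r, c)
      · obtain ⟨rfl, rfl⟩ := Prod.mk.inj h
        simp [hTB, hBlam]
      · rw [Finset.mem_insert, Finset.mem_filter, Finset.mem_filter]
        simp only [hTne _ _ h, h, false_or]
    · subst hj
      rw [← Finset.card_erase_of_mem (a := (r, c)) (by simp [hBi, hBlam])]
      congr 1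
      ext ⟨x, y⟩
      by_cases h : (x, y) = (r, c)
      · obtain ⟨rfl, rfl⟩ := Prod.mk.inj h
        simp [hTB]
      · rw [Finset.mem_erase, Finset.mem_filter, Finset.mem_filter]
        simp only [hTne _ _ h, h, ne_eq, not_false_eq_true, true_and]
    · congr 1
      apply Finset.filter_congr
      rintro ⟨x, y⟩ _
      by_cases h : (x, y) = (r, c)
      · obtain ⟨rfl, rfl⟩ := Prod.mk.inj h
        simp only [hTB, hBi]
        omega
      · simp only [hTne _ _ h]
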